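/- Let F(y₁,y₂) = ∫_a^{y₁} ∫_a^{y₂} f(u,v) dv du be the joint CDF of the DPRH model and F_{Y₁}(y₁) = ∫_a^{y₁} ∫_a^b f(u,v) dv du, F_{Y₂}(y₂) = ∫_a^b ∫_a^{y₂} f(u,v) dv du its marginal CDFs. Then F(y₁,y₂) = F_{Y₁}(y₁)·F_{Y₂}(y₂) for all y₁, y₂ ∈ (a,b) if and only if θ₁′ = θ₁ and θ₂′ = θ₂. -/

import Mathlib

open MeasureTheory Set

noncomputable def dprh (a b : ℝ) (F₀ f₀ : ℝ → ℝ) (θ₁ θ₂ θ₁' θ₂' : ℝ) (y₁ y₂ : ℝ) : ℝ :=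
  if a < y₁ ∧ y₁ < y₂ ∧ y₂ < b then
    θ₁' * θ₂ * f₀ y₁ * f₀ y₂ * F₀ y₁ ^ (θ₁' - 1) * F₀ y₂ ^ (θ₁ + θ₂ - θ₁' - 1)
  else if a < y₂ ∧ y₂ < y₁ ∧ y₁ < b then
    θ₁ * θ₂' * f₀ y₁ * f₀ y₂ * F₀ y₁ ^ (θ₁ + θ₂ - θ₂' - 1) * F₀ y₂ ^ (θ₂' - 1)
  else 0

/-- A distribution function `F` on `[a, b]`, continuous with `F a = 0` and `F b = 1`, which has a
continuous positive density `f` on `(a, b)`. -/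
structure IsBaseline (a b : ℝ) (F f : ℝ → ℝ) : Prop where
  lt : a < b
  continuousOn : ContinuousOn F (Icc a b)
  left : F a = 0
  right : F b = 1
  hasDerivAt : ∀ y ∈ Ioo a b, HasDerivAt F (f y) y
  density_continuousOn : ContinuousOn f (Ioo a b)
  density_pos : ∀ y ∈ Ioo a b, 0 < f y
  strictMonoOn : StrictMonoOn F (Icc a b)

namespace IsBaseline

variable {a b : ℝ} {F f : ℝ → ℝ}

theorem pos (h : IsBaseline a b F f) {y : ℝ} (hy : y ∈ Ioc a b) : 0 < F y :=
  h.left ▸ h.strictMonoOn (left_mem_Icc.2 h.lt.le) (Ioc_subset_Icc_self hy) hy.1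

theorem le_one (h : IsBaseline a b F f) {y : ℝ} (hy : y ∈ Icc a b) : F y ≤ 1 :=
  h.right ▸ h.strictMonoOn.monotoneOn hy (right_mem_Icc.2 h.lt.le) hy.2

theorem continuousOn_rpow (h : IsBaseline a b F f) (p : ℝ) :
    ContinuousOn (fun v => F v ^ p) (Ioc a b) :=
  (h.continuousOn.mono Ioc_subset_Icc_self).rpow_const fun _ hv => Or.inl (h.pos hv).ne'

theorem continuousOn_mul_rpow (h : IsBaseline a b F f) (p : ℝ) :
    ContinuousOn (fun v => f v * F v ^ p) (Ioo a b) :=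
  h.density_continuousOn.mul ((h.continuousOn_rpow p).mono Ioo_subset_Ioc_self)

theorem hasDerivAt_rpow (h : IsBaseline a b F f) (p : ℝ) {v : ℝ} (hv : v ∈ Ioo a b) :
    HasDerivAt (fun v => F v ^ p) (p * (f v * F v ^ (p - 1))) v := by
  have := (h.hasDerivAt v hv).rpow_const (p := p) (Or.inl (h.pos (Ioo_subset_Ioc_self hv)).ne')
  exact this.congr_deriv (by ring)

theorem hasDerivAt_rpow_div (h : IsBaseline a b F f) {p : ℝ} (hp : p ≠ 0) {v : ℝ}
    (hv : v ∈ Ioo a b) : HasDerivAt (fun v => F v ^ p / p) (f v * F v ^ (p - 1)) v :=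
  ((h.hasDerivAt_rpow p hv).div_const p).congr_deriv (by field_simp)

theorem integrand_pos (h : IsBaseline a b F f) (p : ℝ) {v : ℝ} (hv : v ∈ Ioo a b) :
    0 < f v * F v ^ p :=
  mul_pos (h.density_pos v hv) (Real.rpow_pos_of_pos (h.pos (Ioo_subset_Ioc_self hv)) p)

theorem intervalIntegrable_of_pos (h : IsBaseline a b F f) {p : ℝ} (hp : 0 < p) :
    IntervalIntegrable (fun v => f v * F v ^ (p - 1)) volume a b := by
  rw [intervalIntegrable_iff_integrableOn_Ioc_of_le h.lt.le]
  exact intervalIntegral.integrableOn_deriv_of_nonneg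
    ((h.continuousOn.rpow_const fun _ _ => Or.inr hp.le).div_const p)
    (fun v hv => h.hasDerivAt_rpow_div hp.ne' hv) fun v hv => (h.integrand_pos _ hv).le

theorem intervalIntegrable (h : IsBaseline a b F f) (p : ℝ) {u w : ℝ} (hu : u ∈ Ioc a b)
    (hw : w ∈ Ioc a b) : IntervalIntegrable (fun v => f v * F v ^ p) volume u w := by
  have hsub : uIcc u w ⊆ Ioc a b := ordConnected_Ioc.uIcc_subset hu hw
  have h1 : IntervalIntegrable f volume a b := by
    simpa using h.intervalIntegrable_of_pos one_pos
  refine (h1.mono_set ?_).mul_continuousOn ((h.continuousOn_rpow p).mono hsub)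
  rw [uIcc_of_le h.lt.le]
  exact hsub.trans Ioc_subset_Icc_self

theorem intervalIntegrable_of_pos_of_mem (h : IsBaseline a b F f) {p : ℝ} (hp : 0 < p) {u w : ℝ}
    (hu : u ∈ Icc a b) (hw : w ∈ Icc a b) :
    IntervalIntegrable (fun v => f v * F v ^ (p - 1)) volume u w :=
  (h.intervalIntegrable_of_pos hp).mono_set <| by
    rw [uIcc_of_le h.lt.le]; exact ordConnected_Icc.uIcc_subset hu hw

theorem integral_rpow (h : IsBaseline a b F f) {p : ℝ} (hp : 0 < p) {u w : ℝ}
    (hu : u ∈ Icc a b) (hw : w ∈ Icc a b) (huw : u ≤ w) :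
    ∫ v in u..w, f v * F v ^ (p - 1) = F w ^ p / p - F u ^ p / p := by
  refine intervalIntegral.integral_eq_sub_of_hasDerivAt_of_le (f := fun v => F v ^ p / p) huw ?_
    ?_ (h.intervalIntegrable_of_pos_of_mem hp hu hw)
  · exact ((h.continuousOn.rpow_const fun _ _ => Or.inr hp.le).div_const p).mono
      (Icc_subset_Icc hu.1 hw.2)
  · exact fun v hv => h.hasDerivAt_rpow_div hp.ne' (Ioo_subset_Ioo hu.1 hw.2 hv)

theorem integral_rpow_left (h : IsBaseline a b F f) {p : ℝ} (hp : 0 < p) {w : ℝ}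
    (hw : w ∈ Icc a b) : ∫ v in a..w, f v * F v ^ (p - 1) = F w ^ p / p := by
  rw [h.integral_rpow hp (left_mem_Icc.2 h.lt.le) hw hw.1, h.left, Real.zero_rpow hp.ne']
  simp

theorem hasDerivAt_integral_left (h : IsBaseline a b F f) (p : ℝ) {u w : ℝ} (hu : u ∈ Ioo a b)
    (hw : w ∈ Ioc a b) :
    HasDerivAt (fun u => ∫ v in u..w, f v * F v ^ p) (-(f u * F u ^ p)) u :=
  intervalIntegral.integral_hasDerivAt_left
    (h.intervalIntegrable p (Ioo_subset_Ioc_self hu) hw)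
    ((h.continuousOn_mul_rpow p).stronglyMeasurableAtFilter isOpen_Ioo u hu)
    ((h.continuousOn_mul_rpow p).continuousAt (isOpen_Ioo.mem_nhds hu))

variable {θ₁ θ₂ θ₁' θ₂' : ℝ}

/-- The integral of the density over the second coordinate up to `y`, above the diagonal. -/
theorem integral_dprh_of_lt (h : IsBaseline a b F f) (hθ₂' : 0 < θ₂') {u y : ℝ}
    (hu : u ∈ Ioo a b) (hy : y ≤ b) (huy : u < y) :
    ∫ v in a..y, dprh a b F f θ₁ θ₂ θ₁' θ₂' u v =
      f u * F u ^ (θ₁' - 1) * (θ₁ * F u ^ (θ₁ + θ₂ - θ₁') +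
        θ₁' * θ₂ * ∫ v in u..y, f v * F v ^ (θ₁ + θ₂ - θ₁' - 1)) := by
  have hFu : 0 < F u := h.pos (Ioo_subset_Ioc_self hu)
  have e1 : EqOn (fun v => θ₁ * θ₂' * f u * F u ^ (θ₁ + θ₂ - θ₂' - 1) * (f v * F v ^ (θ₂' - 1)))
      (dprh a b F f θ₁ θ₂ θ₁' θ₂' u) (uIoo a u) := by
    intro v hv
    rw [uIoo_of_lt hu.1] at hv
    simp only [dprh, if_neg (fun k => lt_asymm k.2.1 hv.2 : ¬(a < u ∧ u < v ∧ v < b)),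
      if_pos (⟨hv.1, hv.2, hu.2⟩ : a < v ∧ v < u ∧ u < b)]
    ring
  have e2 : EqOn (fun v => θ₁' * θ₂ * f u * F u ^ (θ₁' - 1) *
        (f v * F v ^ (θ₁ + θ₂ - θ₁' - 1)))
      (dprh a b F f θ₁ θ₂ θ₁' θ₂' u) (uIoo u y) := by
    intro v hv
    rw [uIoo_of_lt huy] at hv
    simp only [dprh, if_pos (⟨hu.1, hv.1, hv.2.trans_le hy⟩ : a < u ∧ u < v ∧ v < b)]
    ring
  have i1 := ((h.intervalIntegrable_of_pos_of_mem hθ₂' (left_mem_Icc.2 h.lt.le)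
    (Ioo_subset_Icc_self hu)).const_mul (θ₁ * θ₂' * f u * F u ^ (θ₁ + θ₂ - θ₂' - 1))).congr_uIoo e1
  have i2 := ((h.intervalIntegrable (θ₁ + θ₂ - θ₁' - 1) (Ioo_subset_Ioc_self hu)
    ⟨hu.1.trans huy, hy⟩).const_mul (θ₁' * θ₂ * f u * F u ^ (θ₁' - 1))).congr_uIoo e2
  rw [← intervalIntegral.integral_add_adjacent_intervals i1 i2,
    ← intervalIntegral.integral_congr_uIoo e1, ← intervalIntegral.integral_congr_uIoo e2,
    intervalIntegral.integral_const_mul, intervalIntegral.integral_const_mul,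
    h.integral_rpow_left hθ₂' (Ioo_subset_Icc_self hu)]
  have p1 : F u ^ (θ₁ + θ₂ - θ₂' - 1) * F u ^ θ₂' = F u ^ (θ₁ + θ₂ - 1) := by
    rw [← Real.rpow_add hFu]; ring_nf
  have p2 : F u ^ (θ₁' - 1) * F u ^ (θ₁ + θ₂ - θ₁') = F u ^ (θ₁ + θ₂ - 1) := by
    rw [← Real.rpow_add hFu]; ring_nf
  field_simp
  linear_combination (θ₁ * f u) * (p1 - p2)

theorem integral_dprh_of_gt (h : IsBaseline a b F f) (hθ₂' : 0 < θ₂') {u y : ℝ}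
    (hu : u ∈ Ioo a b) (hy : a < y) (hyu : y < u) :
    ∫ v in a..y, dprh a b F f θ₁ θ₂ θ₁' θ₂' u v =
      θ₁ * (f u * F u ^ (θ₁ + θ₂ - θ₂' - 1)) * F y ^ θ₂' := by
  have e1 : EqOn (fun v => θ₁ * θ₂' * f u * F u ^ (θ₁ + θ₂ - θ₂' - 1) * (f v * F v ^ (θ₂' - 1)))
      (dprh a b F f θ₁ θ₂ θ₁' θ₂' u) (uIoo a y) := by
    intro v hv
    rw [uIoo_of_lt hy] at hv
    have hvu := hv.2.trans hyu
    simp only [dprh, if_neg (fun k => lt_asymm k.2.1 hvu : ¬(a < u ∧ u < v ∧ v < b)),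
      if_pos (⟨hv.1, hvu, hu.2⟩ : a < v ∧ v < u ∧ u < b)]
    ring
  rw [← intervalIntegral.integral_congr_uIoo e1, intervalIntegral.integral_const_mul,
    h.integral_rpow_left hθ₂' ⟨hy.le, (hyu.trans hu.2).le⟩]
  field_simp

theorem continuousAt_integral_dprh (h : IsBaseline a b F f) (hθ₂' : 0 < θ₂') {u y : ℝ}
    (hu : u ∈ Ioo a b) (hy : y ∈ Ioc a b) (huy : u ≠ y) :
    ContinuousAt (fun u => ∫ v in a..y, dprh a b F f θ₁ θ₂ θ₁' θ₂' u v) u := by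
  have hnhds := isOpen_Ioo.mem_nhds hu
  have hc (p : ℝ) : ContinuousAt (fun v => f v * F v ^ p) u :=
    (h.continuousOn_mul_rpow p).continuousAt hnhds
  rcases huy.lt_or_gt with huy | huy
  · have hev := (Filter.eventually_of_mem hnhds fun _ k => k).and (eventually_lt_nhds huy)
    refine ContinuousAt.congr ?_ (hev.mono fun w hw =>
      (h.integral_dprh_of_lt hθ₂' hw.1 hy.2 hw.2).symm)
    exact (hc _).mul ((continuousAt_const.mul (h.hasDerivAt_rpow _ hu).continuousAt).add
      (continuousAt_const.mul (h.hasDerivAt_integral_left _ hu hy).continuousAt))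
  · have hev := (Filter.eventually_of_mem hnhds fun _ k => k).and (eventually_gt_nhds huy)
    refine ContinuousAt.congr ?_ (hev.mono fun w hw =>
      (h.integral_dprh_of_gt hθ₂' hw.1 hy.1 hw.2).symm)
    exact (continuousAt_const.mul (hc _)).mul continuousAt_const

theorem rpow_mul_integral_le (h : IsBaseline a b F f) {p r : ℝ} (hr : 0 ≤ r) (hpr : 0 < p + r)
    {u y : ℝ} (hu : u ∈ Ioo a b) (hy : y ∈ Ioc a b) (huy : u < y) :
    F u ^ r * ∫ v in u..y, f v * F v ^ (p - 1) ≤ 1 / (p + r) := by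
  have hu' := Ioo_subset_Ioc_self hu
  calc F u ^ r * ∫ v in u..y, f v * F v ^ (p - 1)
      = ∫ v in u..y, F u ^ r * (f v * F v ^ (p - 1)) :=
        (intervalIntegral.integral_const_mul _ _).symm
    _ ≤ ∫ v in u..y, f v * F v ^ (p + r - 1) := by
        refine intervalIntegral.integral_mono_on_of_le_Ioo huy.le
          ((h.intervalIntegrable _ hu' hy).const_mul _) (h.intervalIntegrable _ hu' hy) ?_
        intro v hv
        have hv' : v ∈ Ioo a b := ⟨hu.1.trans hv.1, hv.2.trans_le hy.2⟩
        have hle : F u ^ r ≤ F v ^ r := Real.rpow_le_rpow (h.pos hu').le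
          (h.strictMonoOn.monotoneOn (Ioo_subset_Icc_self hu) (Ioo_subset_Icc_self hv') hv.1.le) hr
        calc F u ^ r * (f v * F v ^ (p - 1)) ≤ F v ^ r * (f v * F v ^ (p - 1)) :=
              mul_le_mul_of_nonneg_right hle (h.integrand_pos _ hv').le
          _ = f v * F v ^ (p + r - 1) := by
              rw [mul_left_comm, ← Real.rpow_add (h.pos (Ioo_subset_Ioc_self hv'))]; ring_nf
    _ ≤ 1 / (p + r) := by
        rw [h.integral_rpow hpr (Ioo_subset_Icc_self hu) (Ioc_subset_Icc_self hy) huy.le,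
          ← sub_div]
        refine div_le_div_of_nonneg_right ?_ hpr.le
        linarith [Real.rpow_nonneg (h.pos hu').le (p + r),
          Real.rpow_le_one (h.pos hy).le (h.le_one (Ioc_subset_Icc_self hy)) hpr.le]

theorem norm_integral_dprh_le (h : IsBaseline a b F f) (hθ₁ : 0 < θ₁) (hθ₂ : 0 < θ₂)
    (hθ₁' : 0 < θ₁') (hθ₂' : 0 < θ₂') {ε : ℝ} (hε : ε ≤ θ₁') (hε' : ε < θ₁ + θ₂)
    {u y : ℝ} (hu : u ∈ Ioo a b) (hy : y ∈ Ioc a b) (huy : u ≠ y) :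
    ‖∫ v in a..y, dprh a b F f θ₁ θ₂ θ₁' θ₂' u v‖ ≤
      θ₁ * (f u * F u ^ (θ₁ + θ₂ - 1)) +
        θ₁' * θ₂ / (θ₁ + θ₂ - ε) * (f u * F u ^ (ε - 1)) := by
  have hFu : 0 < F u := h.pos (Ioo_subset_Ioc_self hu)
  have hfu := h.density_pos u hu
  have hs : 0 < θ₁ + θ₂ - ε := sub_pos.2 hε'
  rcases huy.lt_or_gt with huy | huy
  · rw [h.integral_dprh_of_lt hθ₂' hu hy.2 huy]
    have hI : 0 ≤ ∫ v in u..y, f v * F v ^ (θ₁ + θ₂ - θ₁' - 1) :=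
      (intervalIntegral.intervalIntegral_pos_of_pos_on
        (h.intervalIntegrable _ (Ioo_subset_Ioc_self hu) hy)
        (fun v hv => h.integrand_pos _ ⟨hu.1.trans hv.1, hv.2.trans_le hy.2⟩) huy).le
    have hle := h.rpow_mul_integral_le (p := θ₁ + θ₂ - θ₁') (r := θ₁' - ε) (sub_nonneg.2 hε)
      (by linarith) hu hy huy
    rw [show θ₁ + θ₂ - θ₁' + (θ₁' - ε) = θ₁ + θ₂ - ε by ring] at hle
    rw [Real.norm_of_nonneg (by positivity)]
    have p1 : F u ^ (θ₁' - 1) * F u ^ (θ₁ + θ₂ - θ₁') = F u ^ (θ₁ + θ₂ - 1) := by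
      rw [← Real.rpow_add hFu]; ring_nf
    have p2 : F u ^ (θ₁' - 1) = F u ^ (ε - 1) * F u ^ (θ₁' - ε) := by
      rw [← Real.rpow_add hFu]; ring_nf
    have key := mul_le_mul_of_nonneg_left hle
      (show 0 ≤ θ₁' * θ₂ * f u * F u ^ (ε - 1) by positivity)
    rw [mul_add, ← p1]
    refine add_le_add (le_of_eq (by ring)) ?_
    rw [p2]
    calc _ = _ := ?_
      _ ≤ _ := key
      _ = _ := ?_
    · ring
    · field_simp
  · rw [h.integral_dprh_of_gt hθ₂' hu hy.1 huy]
    have hFy : 0 < F y := h.pos hy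
    rw [Real.norm_of_nonneg (by positivity)]
    have hle : F y ^ θ₂' ≤ F u ^ θ₂' := Real.rpow_le_rpow hFy.le
      (h.strictMonoOn.monotoneOn (Ioc_subset_Icc_self hy) (Ioo_subset_Icc_self hu) huy.le) hθ₂'.le
    have p1 : F u ^ (θ₁ + θ₂ - θ₂' - 1) * F u ^ θ₂' = F u ^ (θ₁ + θ₂ - 1) := by
      rw [← Real.rpow_add hFu]; ring_nf
    have h2 : 0 ≤ θ₁' * θ₂ / (θ₁ + θ₂ - ε) * (f u * F u ^ (ε - 1)) := by positivity
    calc θ₁ * (f u * F u ^ (θ₁ + θ₂ - θ₂' - 1)) * F y ^ θ₂'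
        ≤ θ₁ * (f u * F u ^ (θ₁ + θ₂ - θ₂' - 1)) * F u ^ θ₂' := by gcongr
      _ = θ₁ * (f u * F u ^ (θ₁ + θ₂ - 1)) := by rw [← p1]; ring
      _ ≤ _ := le_add_of_nonneg_right h2

theorem intervalIntegrable_integral_dprh (h : IsBaseline a b F f) (hθ₁ : 0 < θ₁) (hθ₂ : 0 < θ₂)
    (hθ₁' : 0 < θ₁') (hθ₂' : 0 < θ₂') {y : ℝ} (hy : y ∈ Ioc a b) :
    IntervalIntegrable (fun u => ∫ v in a..y, dprh a b F f θ₁ θ₂ θ₁' θ₂' u v) volume a b := by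
  obtain ⟨ε, hε0, hε, hε'⟩ : ∃ ε, 0 < ε ∧ ε ≤ θ₁' ∧ ε < θ₁ + θ₂ :=
    ⟨min θ₁' θ₁, lt_min hθ₁' hθ₁, min_le_left _ _, (min_le_right _ _).trans_lt (by linarith)⟩
  have hdom := ((h.intervalIntegrable_of_pos (add_pos hθ₁ hθ₂)).const_mul θ₁).add
    ((h.intervalIntegrable_of_pos hε0).const_mul (θ₁' * θ₂ / (θ₁ + θ₂ - ε)))
  rw [intervalIntegrable_iff_integrableOn_Ioo_of_le h.lt.le] at hdom ⊢
  have hae : (Ioo a b \ {y} : Set ℝ) =ᵐ[volume] Ioo a b := sdiff_null_ae_eq_self (by simp)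
  refine IntegrableOn.congr_set_ae ?_ hae.symm
  have hm : MeasurableSet (Ioo a b \ {y}) := measurableSet_Ioo.diff (measurableSet_singleton y)
  refine Integrable.mono' (hdom.mono_set sdiff_subset) ?_ ?_
  · exact ContinuousOn.aestronglyMeasurable (fun u hu =>
      (h.continuousAt_integral_dprh hθ₂' hu.1 hy hu.2).continuousWithinAt) hm
  · exact (ae_restrict_iff' hm).2 (Filter.Eventually.of_forall fun u hu =>
      h.norm_integral_dprh_le hθ₁ hθ₂ hθ₁' hθ₂' hε hε' hu.1 hy hu.2)

theorem hasDerivAt_cdf_dprh (h : IsBaseline a b F f) (hθ₁ : 0 < θ₁) (hθ₂ : 0 < θ₂)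
    (hθ₁' : 0 < θ₁') (hθ₂' : 0 < θ₂') {u y : ℝ} (hu : u ∈ Ioo a b) (hy : y ∈ Ioc a b)
    (huy : u ≠ y) :
    HasDerivAt (fun w => ∫ u in a..w, ∫ v in a..y, dprh a b F f θ₁ θ₂ θ₁' θ₂' u v)
      (∫ v in a..y, dprh a b F f θ₁ θ₂ θ₁' θ₂' u v) u := by
  have hcont : ContinuousOn (fun u => ∫ v in a..y, dprh a b F f θ₁ θ₂ θ₁' θ₂' u v)
      (Ioo a b \ {y}) := fun w hw =>
    (h.continuousAt_integral_dprh hθ₂' hw.1 hy hw.2).continuousWithinAt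
  refine intervalIntegral.integral_hasDerivAt_right ?_
    (hcont.stronglyMeasurableAtFilter (isOpen_Ioo.sdiff isClosed_singleton) u ⟨hu, huy⟩)
    (h.continuousAt_integral_dprh hθ₂' hu hy huy)
  refine (h.intervalIntegrable_integral_dprh hθ₁ hθ₂ hθ₁' hθ₂' hy).mono_set ?_
  rw [uIcc_of_le h.lt.le, uIcc_of_le hu.1.le]
  exact Icc_subset_Icc_right hu.2.le

/-- If the distribution functions `w ↦ F(w, y)` and `w ↦ F(w, b)` are proportional, so are the inner
integrals of the density. -/
theorem integral_dprh_eq_mul_of_cdf_eq_mul (h : IsBaseline a b F f) (hθ₁ : 0 < θ₁) (hθ₂ : 0 < θ₂)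
    (hθ₁' : 0 < θ₁') (hθ₂' : 0 < θ₂') {y c : ℝ} (hy : y ∈ Ioo a b)
    (hc : ∀ w ∈ Ioo a b, (∫ u in a..w, ∫ v in a..y, dprh a b F f θ₁ θ₂ θ₁' θ₂' u v) =
      (∫ u in a..w, ∫ v in a..b, dprh a b F f θ₁ θ₂ θ₁' θ₂' u v) * c)
    {u : ℝ} (hu : u ∈ Ioo a b) (huy : u ≠ y) :
    ∫ v in a..y, dprh a b F f θ₁ θ₂ θ₁' θ₂' u v =
      (∫ v in a..b, dprh a b F f θ₁ θ₂ θ₁' θ₂' u v) * c := by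
  refine HasDerivAt.unique
    (h.hasDerivAt_cdf_dprh hθ₁ hθ₂ hθ₁' hθ₂' hu (Ioo_subset_Ioc_self hy) huy) ?_
  refine ((h.hasDerivAt_cdf_dprh hθ₁ hθ₂ hθ₁' hθ₂' hu (right_mem_Ioc.2 h.lt)
    hu.2.ne).mul_const c).congr_of_eventuallyEq ?_
  exact Filter.eventually_of_mem (isOpen_Ioo.mem_nhds hu) hc

theorem eq_of_integral_dprh_eq_mul (h : IsBaseline a b F f) (hθ₁ : 0 < θ₁) (hθ₂ : 0 < θ₂)
    (hθ₁' : 0 < θ₁') (hθ₂' : 0 < θ₂') {y c : ℝ} (hy : y ∈ Ioo a b)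
    (hc : ∀ u ∈ Ioo a b, u ≠ y → ∫ v in a..y, dprh a b F f θ₁ θ₂ θ₁' θ₂' u v =
      (∫ v in a..b, dprh a b F f θ₁ θ₂ θ₁' θ₂' u v) * c) :
    θ₁' = θ₁ := by
  have hy' := Ioo_subset_Ioc_self hy
  have hb := right_mem_Ioc.2 h.lt
  set M : ℝ → ℝ := fun u => θ₁ * F u ^ (θ₁ + θ₂ - θ₁') +
    θ₁' * θ₂ * ∫ v in u..y, f v * F v ^ (θ₁ + θ₂ - θ₁' - 1) with hM
  set K := θ₁' * θ₂ * ∫ v in y..b, f v * F v ^ (θ₁ + θ₂ - θ₁' - 1) with hK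
  have hKpos : 0 < K := mul_pos (mul_pos hθ₁' hθ₂) <|
    intervalIntegral.intervalIntegral_pos_of_pos_on (h.intervalIntegrable _ hy' hb)
      (fun v hv => h.integrand_pos _ ⟨hy.1.trans hv.1, hv.2⟩) hy.2
  have hrel : ∀ u ∈ Ioo a y, M u = (M u + K) * c := by
    intro u hu
    have hub : u ∈ Ioo a b := ⟨hu.1, hu.2.trans hy.2⟩
    have := hc u hub hu.2.ne
    rw [h.integral_dprh_of_lt hθ₂' hub hy.2.le hu.2, h.integral_dprh_of_lt hθ₂' hub le_rfl hub.2,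
      mul_assoc _ _ c] at this
    have := mul_left_cancel₀ (h.integrand_pos _ hub).ne' this
    rw [← intervalIntegral.integral_add_adjacent_intervals
        (h.intervalIntegrable _ (Ioo_subset_Ioc_self hub) hy') (h.intervalIntegrable _ hy' hb)] at this
    simp only [hM, hK]
    linear_combination this
  have hc1 : 1 - c ≠ 0 := by
    intro h0
    obtain ⟨u, hu⟩ := exists_between hy.1
    have := hrel u hu
    rw [← sub_eq_zero.1 h0] at this
    linarith
  obtain ⟨u, hu⟩ := exists_between hy.1
  have hub : u ∈ Ioo a b := ⟨hu.1, hu.2.trans hy.2⟩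
  have hd : HasDerivAt M (θ₁ * ((θ₁ + θ₂ - θ₁') * (f u * F u ^ (θ₁ + θ₂ - θ₁' - 1))) +
      θ₁' * θ₂ * -(f u * F u ^ (θ₁ + θ₂ - θ₁' - 1))) u :=
    ((h.hasDerivAt_rpow _ hub).const_mul _).add ((h.hasDerivAt_integral_left _ hub hy').const_mul _)
  have hd0 : HasDerivAt M 0 u := by
    refine (hasDerivAt_const u (K * c / (1 - c))).congr_of_eventuallyEq ?_
    refine Filter.eventually_of_mem (isOpen_Ioo.mem_nhds hu) fun w hw => ?_
    rw [eq_div_iff hc1]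
    linear_combination hrel w hw
  have h0 := hd.unique hd0
  have h1 : ((θ₁ + θ₂) * (θ₁ - θ₁')) * (f u * F u ^ (θ₁ + θ₂ - θ₁' - 1)) = 0 := by
    linear_combination h0
  have h2 := (mul_eq_zero.1 h1).resolve_right (h.integrand_pos _ hub).ne'
  have h3 := (mul_eq_zero.1 h2).resolve_left (add_pos hθ₁ hθ₂).ne'
  linarith

theorem integral_dprh_of_lt_of_left_eq (h : IsBaseline a b F f) (hθ₂ : 0 < θ₂) (hθ₂' : 0 < θ₂')
    {u y : ℝ} (hu : u ∈ Ioo a b) (hy : y ≤ b) (huy : u < y) :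
    ∫ v in a..y, dprh a b F f θ₁ θ₂ θ₁ θ₂' u v = f u * F u ^ (θ₁ - 1) * (θ₁ * F y ^ θ₂) := by
  rw [h.integral_dprh_of_lt hθ₂' hu hy huy, show θ₁ + θ₂ - θ₁ = θ₂ by ring,
    h.integral_rpow hθ₂ (Ioo_subset_Icc_self hu) ⟨(hu.1.trans huy).le, hy⟩ huy.le]
  field_simp
  ring

theorem right_eq_of_integral_dprh_eq_mul (h : IsBaseline a b F f) (hθ₁ : 0 < θ₁) (hθ₂ : 0 < θ₂)
    (hθ₂' : 0 < θ₂') {y c : ℝ} (hy : y ∈ Ioo a b)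
    (hc : ∀ u ∈ Ioo a b, u ≠ y → ∫ v in a..y, dprh a b F f θ₁ θ₂ θ₁ θ₂' u v =
      (∫ v in a..b, dprh a b F f θ₁ θ₂ θ₁ θ₂' u v) * c) :
    θ₂' = θ₂ := by
  obtain ⟨w, hw⟩ := exists_between hy.1
  obtain ⟨u, hu⟩ := exists_between hy.2
  have hwb : w ∈ Ioo a b := ⟨hw.1, hw.2.trans hy.2⟩
  have hub : u ∈ Ioo a b := ⟨hy.1.trans hu.1, hu.2⟩
  have hFu := h.pos (Ioo_subset_Ioc_self hub)
  have hFy := h.pos (Ioo_subset_Ioc_self hy)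
  have hcw : F y ^ θ₂ = c := by
    have := hc w hwb hw.2.ne
    rw [h.integral_dprh_of_lt_of_left_eq hθ₂ hθ₂' hwb hy.2.le hw.2,
      h.integral_dprh_of_lt_of_left_eq hθ₂ hθ₂' hwb le_rfl hwb.2, h.right, Real.one_rpow,
      mul_assoc _ _ c] at this
    have := mul_left_cancel₀ (h.integrand_pos _ hwb).ne' this
    exact mul_left_cancel₀ hθ₁.ne' (this.trans (by ring))
  have hcu : F u ^ (θ₁ + θ₂ - θ₂' - 1) * F y ^ θ₂' = F u ^ (θ₁ - 1) * F y ^ θ₂ := by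
    have := hc u hub hu.1.ne'
    rw [h.integral_dprh_of_gt hθ₂' hub hy.1 hu.1,
      h.integral_dprh_of_lt_of_left_eq hθ₂ hθ₂' hub le_rfl hub.2, h.right, Real.one_rpow,
      ← hcw] at this
    refine mul_left_cancel₀ (mul_pos hθ₁ (h.density_pos u hub)).ne' ?_
    linear_combination this
  by_contra hne
  have hpow : F u ^ (θ₂ - θ₂') = F y ^ (θ₂ - θ₂') := by
    rw [show θ₁ + θ₂ - θ₂' - 1 = θ₁ - 1 + (θ₂ - θ₂') by ring, Real.rpow_add hFu, mul_assoc] at hcu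
    rw [Real.rpow_sub hFy, eq_div_iff (Real.rpow_pos_of_pos hFy _).ne']
    exact mul_left_cancel₀ (Real.rpow_pos_of_pos hFu _).ne' hcu
  have hFeq := (Real.rpow_left_inj hFu.le hFy.le (sub_ne_zero.2 (Ne.symm hne))).1 hpow
  exact (h.strictMonoOn (Ioo_subset_Icc_self hy) (Ioo_subset_Icc_self hub) hu.1).ne' hFeq

theorem cdf_dprh_of_eq (h : IsBaseline a b F f) (hθ₁ : 0 < θ₁) (hθ₂ : 0 < θ₂) {w y : ℝ}
    (hw : w ∈ Ioc a b) (hy : y ∈ Ioc a b) :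
    ∫ u in a..w, ∫ v in a..y, dprh a b F f θ₁ θ₂ θ₁ θ₂ u v = F w ^ θ₁ * F y ^ θ₂ := by
  have hae : ∀ᵐ u : ℝ, u ≠ y ∧ u ≠ b :=
    (Measure.ae_ne volume y).and (Measure.ae_ne volume b)
  rw [intervalIntegral.integral_congr_ae (g := fun u =>
    (θ₁ * F y ^ θ₂) * (f u * F u ^ (θ₁ - 1))), intervalIntegral.integral_const_mul,
    h.integral_rpow_left hθ₁ (Ioc_subset_Icc_self hw)]
  · field_simp
  · filter_upwards [hae] with u hu hmem
    rw [uIoc_of_le hw.1.le] at hmem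
    have hub : u ∈ Ioo a b := ⟨hmem.1, lt_of_le_of_ne (hmem.2.trans hw.2) hu.2⟩
    rcases hu.1.lt_or_gt with huy | huy
    · rw [h.integral_dprh_of_lt_of_left_eq hθ₂ hθ₂ hub hy.2 huy]
      ring
    · rw [h.integral_dprh_of_gt hθ₂ hub hy.1 huy, show θ₁ + θ₂ - θ₂ - 1 = θ₁ - 1 by ring]
      ring

theorem dprh_cdf_eq_mul_iff (h : IsBaseline a b F f) (hθ₁ : 0 < θ₁) (hθ₂ : 0 < θ₂)
    (hθ₁' : 0 < θ₁') (hθ₂' : 0 < θ₂') :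
    (∀ y₁ ∈ Ioo a b, ∀ y₂ ∈ Ioo a b,
        (∫ u in a..y₁, ∫ v in a..y₂, dprh a b F f θ₁ θ₂ θ₁' θ₂' u v) =
          (∫ u in a..y₁, ∫ v in a..b, dprh a b F f θ₁ θ₂ θ₁' θ₂' u v) *
            (∫ u in a..b, ∫ v in a..y₂, dprh a b F f θ₁ θ₂ θ₁' θ₂' u v)) ↔
      (θ₁' = θ₁ ∧ θ₂' = θ₂) := by
  constructor
  · intro hind
    obtain ⟨y, hy⟩ := exists_between h.lt
    have hc := fun u hu huy => h.integral_dprh_eq_mul_of_cdf_eq_mul hθ₁ hθ₂ hθ₁' hθ₂' hy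
      (fun w hw => hind w hw y hy) (u := u) hu huy
    obtain rfl : θ₁' = θ₁ := h.eq_of_integral_dprh_eq_mul hθ₁ hθ₂ hθ₁' hθ₂' hy hc
    exact ⟨rfl, h.right_eq_of_integral_dprh_eq_mul hθ₁ hθ₂ hθ₂' hy hc⟩
  · rintro ⟨rfl, rfl⟩ y₁ hy₁ y₂ hy₂
    have hb := right_mem_Ioc.2 h.lt
    rw [h.cdf_dprh_of_eq hθ₁ hθ₂ (Ioo_subset_Ioc_self hy₁) (Ioo_subset_Ioc_self hy₂),
      h.cdf_dprh_of_eq hθ₁ hθ₂ (Ioo_subset_Ioc_self hy₁) hb,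
      h.cdf_dprh_of_eq hθ₁ hθ₂ hb (Ioo_subset_Ioc_self hy₂), h.right]
    simp

end IsBaseline

/-- A strictly increasing function on `(a, b)` with positive continuous derivative and limits
`0` and `1` at the end points extends to a baseline distribution function on `[a, b]`. -/
theorem isBaseline_extendFrom {a b : ℝ} (hab : a < b) {F f : ℝ → ℝ}
    (hderiv : ∀ y ∈ Ioo a b, HasDerivAt F (f y) y) (hf : ContinuousOn f (Ioo a b))
    (hpos : ∀ y ∈ Ioo a b, 0 < f y)
    (hFa : Filter.Tendsto F (nhdsWithin a (Ioi a)) (nhds 0))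
    (hFb : Filter.Tendsto F (nhdsWithin b (Iio b)) (nhds 1)) :
    IsBaseline a b (extendFrom (Ioo a b) F) f := by
  have hcont : ContinuousOn F (Ioo a b) := fun y hy =>
    (hderiv y hy).continuousAt.continuousWithinAt
  have hcont' := continuousOn_Icc_extendFrom_Ioo hcont hFa hFb
  have hd : ∀ y ∈ Ioo a b, HasDerivAt (extendFrom (Ioo a b) F) (f y) y := fun y hy =>
    (hderiv y hy).congr_of_eventuallyEq <|
      Filter.eventually_of_mem (isOpen_Ioo.mem_nhds hy) (extendFrom_extends hcont)
  refine ⟨hab, hcont', eq_lim_at_left_extendFrom_Ioo hab hFa,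
    eq_lim_at_right_extendFrom_Ioo hab hFb,
    hd, hf, hpos, strictMonoOn_of_deriv_pos (convex_Icc a b) hcont' fun y hy => ?_⟩
  rw [interior_Icc] at hy
  rw [(hd y hy).deriv]
  exact hpos y hy

theorem dprh_congr {a b : ℝ} {F G : ℝ → ℝ} (hFG : EqOn F G (Ioo a b)) (f : ℝ → ℝ)
    (θ₁ θ₂ θ₁' θ₂' : ℝ) : dprh a b F f θ₁ θ₂ θ₁' θ₂' = dprh a b G f θ₁ θ₂ θ₁' θ₂' := by
  funext u v
  unfold dprh
  split_ifs with h1 h2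
  · rw [hFG ⟨h1.1, h1.2.1.trans h1.2.2⟩, hFG ⟨h1.1.trans h1.2.1, h1.2.2⟩]
  · rw [hFG ⟨h2.1, h2.2.1.trans h2.2.2⟩, hFG ⟨h2.1.trans h2.2.1, h2.2.2⟩]
  · rfl

theorem dprh_independent_iff
    (a b : ℝ) (hab : a < b) (F₀ f₀ : ℝ → ℝ)
    (hderiv : ∀ y ∈ Ioo a b, HasDerivAt F₀ (f₀ y) y)
    (hf₀cont : ContinuousOn f₀ (Ioo a b))
    (hmono : StrictMonoOn F₀ (Ioo a b))
    (hf₀pos : ∀ y ∈ Ioo a b, 0 < f₀ y)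
    (hF₀pos : ∀ y ∈ Ioo a b, 0 < F₀ y)
    (hF₀lt1 : ∀ y ∈ Ioo a b, F₀ y < 1)
    (hFa : Filter.Tendsto F₀ (nhdsWithin a (Ioi a)) (nhds 0))
    (hFb : Filter.Tendsto F₀ (nhdsWithin b (Iio b)) (nhds 1))
    (θ₁ θ₂ θ₁' θ₂' : ℝ) (hθ₁ : 0 < θ₁) (hθ₂ : 0 < θ₂) (hθ₁' : 0 < θ₁') (hθ₂' : 0 < θ₂')
    :
    (∀ y₁ ∈ Ioo a b, ∀ y₂ ∈ Ioo a b,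
        (∫ u in a..y₁, ∫ v in a..y₂, dprh a b F₀ f₀ θ₁ θ₂ θ₁' θ₂' u v) =
          (∫ u in a..y₁, ∫ v in a..b, dprh a b F₀ f₀ θ₁ θ₂ θ₁' θ₂' u v) *
            (∫ u in a..b, ∫ v in a..y₂, dprh a b F₀ f₀ θ₁ θ₂ θ₁' θ₂' u v)) ↔
      (θ₁' = θ₁ ∧ θ₂' = θ₂) := by
  have hcont : ContinuousOn F₀ (Ioo a b) := fun y hy =>
    (hderiv y hy).continuousAt.continuousWithinAt
  have hbase := isBaseline_extendFrom hab hderiv hf₀cont hf₀pos hFa hFb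
  rw [← dprh_congr (extendFrom_extends hcont : EqOn _ F₀ (Ioo a b))]
  exact hbase.dprh_cdf_eq_mul_iff hθ₁ hθ₂ hθ₁' hθ₂'
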